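/- arXiv:2507.23240 — 2 statements merged into one kernel-verified Lean document; each statement's English description precedes it below -/
import Mathlib

section
/- Let m > p ≥ 2, X a real m×p matrix, ν_i > 0, and w ∈ S_m with 0 ≤ w_l < 1 for every l and f(w) > 0; fix an index i. With b, B defined as in the context, if B = 0 then b = 0. -/
/-!
If `b ≠ 0`, the information matrix at the reweighted allocation is positive semidefinite (its
weights are nonnegative) with nonzero determinant, hence positive definite. Deleting a column of
`X` passes to a principal submatrix, which is again positive definite, so each summand of `B` is
positive. As `p > 0`, this gives `B > 0`.
-/

open Matrix

def dropIdx {p : ℕ} (j : Fin p) (k : Fin (p - 1)) : Fin p :=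
  if h : (k : ℕ) < (j : ℕ) then ⟨k, lt_trans h j.isLt⟩
  else ⟨(k : ℕ) + 1, by have hk := k.isLt; omega⟩

noncomputable def infoM {m p : ℕ} (X : Matrix (Fin m) (Fin p) ℝ) (ν w : Fin m → ℝ) :
    Matrix (Fin p) (Fin p) ℝ :=
  Xᵀ * Matrix.diagonal (fun i => w i * ν i) * X

noncomputable def fFun {m p : ℕ} (X : Matrix (Fin m) (Fin p) ℝ) (ν w : Fin m → ℝ) : ℝ :=
  (infoM X ν w).det

noncomputable def fminus {m p : ℕ} (X : Matrix (Fin m) (Fin p) ℝ) (ν : Fin m → ℝ)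
    (j : Fin p) (w : Fin m → ℝ) : ℝ :=
  ((X.submatrix id (dropIdx j))ᵀ * Matrix.diagonal (fun i => w i * ν i)
    * X.submatrix id (dropIdx j)).det

noncomputable def liftW {m : ℕ} (w : Fin m → ℝ) (i : Fin m) (x : ℝ) : Fin m → ℝ :=
  fun l => if l = i then x else w l * (1 - x) / (1 - w i)

theorem dropIdx_injective {p : ℕ} (j : Fin p) : Function.Injective (dropIdx j) := by
  intro a b h
  unfold dropIdx at h
  ext
  split_ifs at h <;> simp only [Fin.mk.injEq] at h <;> omega

theorem infoM_posSemidef {m p : ℕ} (X : Matrix (Fin m) (Fin p) ℝ) (ν w : Fin m → ℝ)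
    (hν : ∀ l, 0 < ν l) (hw : ∀ l, 0 ≤ w l) : (infoM X ν w).PosSemidef := by
  have hD : (Matrix.diagonal (fun l => w l * ν l)).PosSemidef :=
    Matrix.posSemidef_diagonal_iff.2 fun l => mul_nonneg (hw l) (hν l).le
  simpa [infoM, Matrix.conjTranspose_eq_transpose_of_trivial] using
    hD.conjTranspose_mul_mul_same X

theorem fminus_eq_det_submatrix {m p : ℕ} (X : Matrix (Fin m) (Fin p) ℝ) (ν w : Fin m → ℝ)
    (j : Fin p) :
    fminus X ν j w = ((infoM X ν w).submatrix (dropIdx j) (dropIdx j)).det := rfl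

theorem liftW_zero_nonneg {m : ℕ} (w : Fin m → ℝ) (hw0 : ∀ l, 0 ≤ w l) (i : Fin m)
    (hi : w i < 1) (l : Fin m) : 0 ≤ liftW w i 0 l := by
  unfold liftW
  split_ifs
  · exact le_rfl
  · exact div_nonneg (by simpa using hw0 l) (by linarith)

theorem stmt9 {m p : ℕ} (hp : 2 ≤ p) (hmp : p < m)
    (X : Matrix (Fin m) (Fin p) ℝ) (ν : Fin m → ℝ) (hν : ∀ l, 0 < ν l)
    (w : Fin m → ℝ) (hw0 : ∀ l, 0 ≤ w l) (hw1 : ∑ l, w l = 1)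
    (hwlt : ∀ l, w l < 1) (hf : 0 < fFun X ν w) (i : Fin m)
    (b B : ℝ)
    (hb : b = fFun X ν (liftW w i 0))
    (hB : B = ∑ j, fminus X ν j (liftW w i 0)) :
    B = 0 → b = 0 := by
  intro hB0
  by_contra hb0
  have hS := infoM_posSemidef X ν _ hν (liftW_zero_nonneg w hw0 i (hwlt i))
  have hdet : (infoM X ν (liftW w i 0)).det ≠ 0 := fun h => hb0 (hb.trans h)
  have hP : (infoM X ν (liftW w i 0)).PosDef :=
    hS.posDef_iff_isUnit.2 ((Matrix.isUnit_iff_isUnit_det _).2 hdet.isUnit)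
  have hpos : 0 < ∑ j, fminus X ν j (liftW w i 0) := by
    apply Finset.sum_pos
    · intro j _
      rw [fminus_eq_det_submatrix]
      exact (hP.submatrix (dropIdx_injective j)).det_pos
    · exact ⟨⟨0, by omega⟩, Finset.mem_univ _⟩
  linarith
end

section
/- Let m > p ≥ 2, X a real m×p matrix, ν_i > 0, and w ∈ S_m with 0 ≤ w_l < 1 for every l and f(w) > 0; fix an index i and define a, b, A, B as in the context. If A = B and a > 2b, then max_{x ∈ [0,1]} h_i(x) = a²/(4(a−b)B) > 0, and this maximum is attained at the unique point x* = (a − 2b)/(2a − 2b) ∈ (0,1). -/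
/-!
Write `M(x)` for the information matrix at `w(x)`, and `u` for the `i`-th row of `X`. Along the path,
`M(x) = (1 - x) M(0) + x ν_i u uᵀ`, and a determinant is affine along a rank-one direction
(`det_add_smul_vecMulVec`). Hence `f_i(x) = (1 - x)^(p-1) (a x + b (1 - x))`
(`det_infoM_liftW`), and the same formula in size `p - 1` gives
`∑ j, f_i^(-j)(x) = (1 - x)^(p-2) (A x + B (1 - x)) = (1 - x)^(p-2) B` when `A = B`.

By Cramer's rule, `tr M⁻¹ = (∑ j, f_{-j}) / f` (`trace_inv_infoM`), so that
`h_i(x) = (1 - x) (a x + b (1 - x)) / B` for `x < 1` whenever `f_i(x) > 0`. This is a quadratic, and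
`a² / (4 (a - b)) - (1 - x) (a x + b (1 - x)) = (a - b) (x - x*)²`, which gives the maximum and its
uniqueness. Positivity of `B` comes from the point `x = w_i`, where `w(x) = w` and `M` is
positive definite; points where `f_i` vanishes, including `x = 1`, have `h_i = 0`.
-/

open Matrix

noncomputable def hFun {m p : ℕ} (X : Matrix (Fin m) (Fin p) ℝ) (ν w : Fin m → ℝ) : ℝ :=
  if 0 < fFun X ν w then ((infoM X ν w)⁻¹).trace⁻¹ else 0

lemma infoM_apply {m n : ℕ} (Y : Matrix (Fin m) (Fin n) ℝ) (ν w : Fin m → ℝ) (j k : Fin n) :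
    infoM Y ν w j k = ∑ l, w l * ν l * (Y l j * Y l k) := by
  rw [infoM, Matrix.mul_apply]
  simp only [Matrix.mul_diagonal, Matrix.transpose_apply]
  exact Finset.sum_congr rfl fun l _ => by ring

/-- The determinant is affine along a rank-one direction. The matrix `M + t u vᵀ` is the Schur
complement of the bordered matrix with blocks `M`, `-u`, `t vᵀ`, `1`, whose last row is affine
in `t`. -/
lemma det_add_smul_vecMulVec {n : ℕ} (M : Matrix (Fin n) (Fin n) ℝ) (u v : Fin n → ℝ) :
    ∃ c : ℝ, ∀ t : ℝ, (M + t • Matrix.vecMulVec u v).det = M.det + t * c := by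
  let N : Matrix (Fin n ⊕ Unit) (Fin n ⊕ Unit) ℝ :=
    Matrix.fromBlocks M (Matrix.of fun j _ => -u j) 0 1
  refine ⟨(N.updateRow (Sum.inr ()) (Sum.elim v 0)).det, fun t => ?_⟩
  have key : N.updateRow (Sum.inr ()) (Sum.elim (0 : Fin n → ℝ) 1 + t • Sum.elim v 0) =
      Matrix.fromBlocks M (Matrix.of fun j _ => -u j) (Matrix.of fun _ k => t * v k) 1 := by
    ext (j | j) (k | k) <;> simp [N, Matrix.updateRow_apply]
  have hN : N.updateRow (Sum.inr ()) (Sum.elim (0 : Fin n → ℝ) 1) = N := by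
    ext (j | j) (k | k) <;> simp [N, Matrix.updateRow_apply]
  have h1 := congrArg Matrix.det key
  rw [Matrix.det_updateRow_add, Matrix.det_updateRow_smul, hN,
    show N.det = M.det by simp [N], Matrix.det_fromBlocks_one₂₂] at h1
  refine Eq.trans ?_ h1.symm
  congr 1
  ext j k
  simp [Matrix.mul_apply, Matrix.vecMulVec_apply]
  ring

lemma infoM_liftW {m n : ℕ} (Y : Matrix (Fin m) (Fin n) ℝ) (ν w : Fin m → ℝ) (i : Fin m) (x : ℝ) :
    infoM Y ν (liftW w i x) =
      (1 - x) • infoM Y ν (liftW w i 0) + x • Matrix.vecMulVec (fun j => ν i * Y i j) (Y i) := by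
  ext j k
  simp only [infoM_apply, Matrix.add_apply, Matrix.smul_apply, Matrix.vecMulVec_apply, smul_eq_mul]
  rw [Finset.mul_sum, ← Finset.add_sum_erase _ _ (Finset.mem_univ i),
    ← Finset.add_sum_erase (Finset.univ) (fun l => (1 - x) * _) (Finset.mem_univ i)]
  have : ∀ l ∈ Finset.univ.erase i, liftW w i x l * ν l * (Y l j * Y l k) =
      (1 - x) * (liftW w i 0 l * ν l * (Y l j * Y l k)) := by
    intro l hl
    simp only [liftW, if_neg (Finset.ne_of_mem_erase hl)]
    ring
  rw [Finset.sum_congr rfl this]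
  simp only [liftW, if_true]
  ring

/-- For a matrix with `n + 1` columns, `f_i(x) = (1 - x)^n (a x + b (1 - x))`, with `a` and `b`
expressed through the values of `f_i` at `1 / 2` and `0`. It applies to `fFun` and, with a column
of `X` deleted, to `fminus`. -/
lemma det_infoM_liftW {m n : ℕ} (Y : Matrix (Fin m) (Fin (n + 1)) ℝ) (ν w : Fin m → ℝ) (i : Fin m)
    (x : ℝ) (hx : x ≠ 1) :
    (infoM Y ν (liftW w i x)).det = (1 - x) ^ n *
      ((2 ^ (n + 1) * (infoM Y ν (liftW w i (1 / 2))).det - (infoM Y ν (liftW w i 0)).det) * x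
        + (infoM Y ν (liftW w i 0)).det * (1 - x)) := by
  obtain ⟨c, hc⟩ := det_add_smul_vecMulVec (infoM Y ν (liftW w i 0)) (fun j => ν i * Y i j) (Y i)
  have key : ∀ y : ℝ, y ≠ 1 → (infoM Y ν (liftW w i y)).det =
      (1 - y) ^ n * (c * y + (infoM Y ν (liftW w i 0)).det * (1 - y)) := by
    intro y hy
    have hy' : 1 - y ≠ 0 := sub_ne_zero.mpr hy.symm
    have : infoM Y ν (liftW w i y) = (1 - y) • (infoM Y ν (liftW w i 0) +
        (y / (1 - y)) • Matrix.vecMulVec (fun j => ν i * Y i j) (Y i)) := by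
      rw [infoM_liftW, smul_add, smul_smul, mul_div_cancel₀ _ hy']
    rw [this, Matrix.det_smul, hc, Fintype.card_fin]
    field_simp
    ring
  have ha : 2 ^ (n + 1) * (infoM Y ν (liftW w i (1 / 2))).det - (infoM Y ν (liftW w i 0)).det = c := by
    have h2 : (2 : ℝ) ^ n * (1 / 2) ^ n = 1 := by rw [← mul_pow]; norm_num
    rw [key (1 / 2) (by norm_num)]
    norm_num at h2 ⊢
    linear_combination (c + (infoM Y ν (liftW w i 0)).det) * h2
  rw [ha, key x hx]

lemma dropIdx_eq_succAbove {n : ℕ} (j : Fin (n + 1)) : dropIdx j = j.succAbove := by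
  funext k
  ext
  simp only [dropIdx, Fin.succAbove, Fin.lt_def, Fin.val_castSucc]
  split_ifs <;> simp

lemma trace_inv_infoM {m n : ℕ} (X : Matrix (Fin m) (Fin (n + 1)) ℝ) (ν w : Fin m → ℝ) :
    ((infoM X ν w)⁻¹).trace = (fFun X ν w)⁻¹ * ∑ j, fminus X ν j w := by
  rw [Matrix.inv_def, Matrix.trace_smul, Ring.inverse_eq_inv', smul_eq_mul]
  congr 1
  refine Finset.sum_congr rfl fun j _ => ?_
  rw [Matrix.diag_apply, Matrix.adjugate_fin_succ_eq_det_submatrix, fminus, dropIdx_eq_succAbove]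
  rw [Even.neg_one_pow ⟨_, rfl⟩, one_mul]
  rfl

lemma posSemidef_infoM {m n : ℕ} (X : Matrix (Fin m) (Fin n) ℝ) (ν w : Fin m → ℝ)
    (hν : ∀ l, 0 < ν l) (hw : ∀ l, 0 ≤ w l) : (infoM X ν w).PosSemidef := by
  have h : (Matrix.diagonal (fun l => w l * ν l)).PosSemidef :=
    Matrix.PosSemidef.diagonal fun l => mul_nonneg (hw l) (hν l).le
  simpa [infoM] using h.conjTranspose_mul_mul_same X

lemma sum_fminus_pos {m n : ℕ} (X : Matrix (Fin m) (Fin (n + 1)) ℝ) (ν w : Fin m → ℝ)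
    (hν : ∀ l, 0 < ν l) (hw : ∀ l, 0 ≤ w l) (hf : 0 < fFun X ν w) :
    0 < ∑ j, fminus X ν j w := by
  have hpd : (infoM X ν w).PosDef :=
    (posSemidef_infoM X ν w hν hw).posDef_iff_isUnit.mpr
      ((Matrix.isUnit_iff_isUnit_det _).mpr hf.ne'.isUnit)
  have := hpd.inv.trace_pos
  rw [trace_inv_infoM] at this
  exact (mul_pos_iff_of_pos_left (inv_pos.mpr hf)).mp this

theorem stmt11 {m p : ℕ} (hp : 2 ≤ p) (hmp : p < m)
    (X : Matrix (Fin m) (Fin p) ℝ) (ν : Fin m → ℝ) (hν : ∀ l, 0 < ν l)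
    (w : Fin m → ℝ) (hw0 : ∀ l, 0 ≤ w l) (hw1 : ∑ l, w l = 1)
    (hwlt : ∀ l, w l < 1) (hf : 0 < fFun X ν w) (i : Fin m)
    (a b A B : ℝ)
    (hb : b = fFun X ν (liftW w i 0))
    (ha : a = 2 ^ p * fFun X ν (liftW w i (1 / 2)) - b)
    (hB : B = ∑ j, fminus X ν j (liftW w i 0))
    (hA : A = ∑ j, (2 ^ (p - 1) * fminus X ν j (liftW w i (1 / 2))
        - fminus X ν j (liftW w i 0)))
    (hAB : A = B) (hab : 2 * b < a)
    (xstar : ℝ) (hxstar : xstar = (a - 2 * b) / (2 * a - 2 * b)) :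
    (0 < xstar ∧ xstar < 1) ∧
    0 < a ^ 2 / (4 * (a - b) * B) ∧
    hFun X ν (liftW w i xstar) = a ^ 2 / (4 * (a - b) * B) ∧
    (∀ x ∈ Set.Icc (0 : ℝ) 1, hFun X ν (liftW w i x) ≤ a ^ 2 / (4 * (a - b) * B)) ∧
    (∀ x ∈ Set.Icc (0 : ℝ) 1,
      hFun X ν (liftW w i x) = a ^ 2 / (4 * (a - b) * B) → x = xstar) := by
  obtain ⟨q, rfl⟩ : ∃ q, p = q + 2 := ⟨p - 2, by omega⟩
  have hfx : ∀ x : ℝ, x ≠ 1 →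
      fFun X ν (liftW w i x) = (1 - x) ^ (q + 1) * (a * x + b * (1 - x)) := by
    intro x hx
    rw [ha, hb]
    exact det_infoM_liftW X ν w i x hx
  have hsx : ∀ x : ℝ, x ≠ 1 → ∑ j, fminus X ν j (liftW w i x) = (1 - x) ^ q * B := by
    intro x hx
    have h1 : ∀ j, fminus X ν j (liftW w i x) = (1 - x) ^ q *
        ((2 ^ (q + 1) * fminus X ν j (liftW w i (1 / 2)) - fminus X ν j (liftW w i 0)) * x
          + fminus X ν j (liftW w i 0) * (1 - x)) :=
      fun j => det_infoM_liftW (X.submatrix id (dropIdx j)) ν w i x hx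
    have hA' : A = ∑ j, (2 ^ (q + 1) * fminus X ν j (liftW w i (1 / 2))
        - fminus X ν j (liftW w i 0)) := hA
    rw [Finset.sum_congr rfl fun j _ => h1 j, ← Finset.mul_sum, Finset.sum_add_distrib,
      ← Finset.sum_mul, ← Finset.sum_mul, ← hA', ← hB, hAB]
    ring
  have hww : liftW w i (w i) = w := by
    funext l
    have : 1 - w i ≠ 0 := (sub_pos.mpr (hwlt i)).ne'
    by_cases h : l = i
    · simp [liftW, h]
    · simp [liftW, h, this]
  have hBpos : 0 < B := by
    have h := sum_fminus_pos X ν w hν hw0 hf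
    rw [← hww, hsx _ (hwlt i).ne] at h
    exact (mul_pos_iff_of_pos_left (pow_pos (sub_pos.mpr (hwlt i)) q)).mp h
  have hb0 : 0 ≤ b := by
    rw [hb]
    refine (posSemidef_infoM X ν _ hν fun l => ?_).det_nonneg
    have := sub_pos.mpr (hwlt i)
    have := hw0 l
    simp only [liftW]
    split_ifs
    · exact le_rfl
    · positivity
  have hapos : 0 < a := by linarith
  have habpos : 0 < a - b := by linarith
  have hf1 : fFun X ν (liftW w i 1) = 0 := by
    have h : infoM X ν (liftW w i 1) = Matrix.vecMulVec (fun j => ν i * X i j) (X i) := by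
      rw [infoM_liftW]; simp
    exact (congrArg Matrix.det h).trans (Matrix.det_vecMulVec _ _)
  have hhx : ∀ x : ℝ, x ≠ 1 → 0 < fFun X ν (liftW w i x) →
      hFun X ν (liftW w i x) = (1 - x) * (a * x + b * (1 - x)) / B := by
    intro x hx hpos
    have : 1 - x ≠ 0 := sub_ne_zero.mpr hx.symm
    rw [hFun, if_pos hpos, trace_inv_infoM, hsx x hx, hfx x hx, mul_inv, inv_inv]
    field_simp
    ring
  have hx0 : 0 < xstar := by
    rw [hxstar]; exact div_pos (by linarith) (by linarith)
  have hx1 : xstar < 1 := by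
    rw [hxstar, div_lt_one (by linarith)]; linarith
  have hmax : 0 < a ^ 2 / (4 * (a - b) * B) := by positivity
  have hsquare : ∀ x : ℝ, (1 - x) * (a * x + b * (1 - x)) / B =
      a ^ 2 / (4 * (a - b) * B) - (a - b) / B * (x - xstar) ^ 2 := by
    intro x
    have h2 : 2 * a - 2 * b = 2 * (a - b) := by ring
    have := habpos.ne'
    rw [hxstar, h2]
    field_simp
    ring
  have hquad : 0 < (a - b) / B := div_pos habpos hBpos
  -- Everywhere, either `h_i` vanishes, or it is given by the quadratic.
  have hcases : ∀ x : ℝ, hFun X ν (liftW w i x) = 0 ∨ hFun X ν (liftW w i x) =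
      a ^ 2 / (4 * (a - b) * B) - (a - b) / B * (x - xstar) ^ 2 := by
    intro x
    by_cases hpos : 0 < fFun X ν (liftW w i x)
    · have hx : x ≠ 1 := fun h => by rw [h, hf1] at hpos; exact hpos.false
      exact Or.inr ((hhx x hx hpos).trans (hsquare x))
    · exact Or.inl (if_neg hpos)
  refine ⟨⟨hx0, hx1⟩, hmax, ?_, fun x _ => ?_, fun x _ hx => ?_⟩
  · have h1 : 0 < 1 - xstar := sub_pos.mpr hx1
    have hpos : 0 < fFun X ν (liftW w i xstar) := by
      rw [hfx _ hx1.ne]; positivity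
    rw [hhx _ hx1.ne hpos, hsquare]
    simp
  · rcases hcases x with h | h
    · rw [h]; exact hmax.le
    · rw [h]; nlinarith [mul_nonneg hquad.le (sq_nonneg (x - xstar))]
  · rcases hcases x with h | h
    · exact absurd (h.symm.trans hx) hmax.ne
    · have h0 : (a - b) / B * (x - xstar) ^ 2 = 0 := by linarith
      have h1 := (mul_eq_zero.mp h0).resolve_left hquad.ne'
      exact sub_eq_zero.mp (pow_eq_zero_iff (two_ne_zero) |>.mp h1)
end
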